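/- arXiv:2006.09076 — 5 statements merged into one kernel-verified Lean document; each statement's English description precedes it below -/
import Mathlib

section
/- Transport relation for the shuffle connected sum: for all (possibly empty) indices k, l, every nonempty index h, and every positive integer N, one has Z^sh_N(k_→; l; ↑h) = Z^sh_N(k_↑; l; ←h). -/
open scoped Classical

noncomputable section

/-- Last value of a tuple, with default `d` for the empty tuple. -/
def lastD {c : ℕ} (d : ℕ) (f : Fin c → ℕ) : ℕ :=
  if h : 0 < c then f ⟨c - 1, Nat.sub_lt h Nat.one_pos⟩ else d

/-- First value of a tuple, with default `d` for the empty tuple. -/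
def headD {c : ℕ} (d : ℕ) (f : Fin c → ℕ) : ℕ :=
  if h : 0 < c then f ⟨0, h⟩ else d

/-- The weight `∏_{i=1}^{a-1} nᵢ^(-kᵢ) · nₐ^(-(kₐ-1))` (the last exponent is lowered by 1). -/
def wtLast (k : List ℕ) (n : Fin k.length → ℕ) : ℝ :=
  ∏ i, ((n i : ℝ) ^ (if i.1 = k.length - 1 then k.get i - 1 else k.get i))⁻¹

/-- The weight `r₁^(-(h₁-1)) · ∏_{i=2}^{c} rᵢ^(-hᵢ)` (the first exponent is lowered by 1). -/
def wtFirst (h : List ℕ) (r : Fin h.length → ℕ) : ℝ :=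
  ∏ i, ((r i : ℝ) ^ (if i.1 = 0 then h.get i - 1 else h.get i))⁻¹

/-- The shuffle connected sum `Z^sh_N(k; l; h)`: the sum of
`(∏_{i<a} nᵢ^(-kᵢ)) nₐ^(-(kₐ-1)) (∏_{i<b} mᵢ^(-lᵢ)) m_b^(-(l_b-1)) r₁^(-(h₁-1)) ∏_{i≥2} rᵢ^(-hᵢ)`
over `0 < n₁ < ⋯ < nₐ`, `0 < m₁ < ⋯ < m_b`, `r₁ < ⋯ < r_c ≤ N` with `r₁ = nₐ + m_b`
(with `nₐ := 0` if `a = 0` and `m_b := 0` if `b = 0`). -/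
def Zsh (N : ℕ) (k l h : List ℕ) : ℝ :=
  ∑' p : (Fin k.length → ℕ) × (Fin l.length → ℕ) × (Fin h.length → ℕ),
    Set.indicator
      {p : (Fin k.length → ℕ) × (Fin l.length → ℕ) × (Fin h.length → ℕ) |
        (∀ i, 0 < p.1 i) ∧ StrictMono p.1 ∧ (∀ i, 0 < p.2.1 i) ∧ StrictMono p.2.1 ∧
          StrictMono p.2.2 ∧ lastD 0 p.2.2 ≤ N ∧
          headD 0 p.2.2 = lastD 0 p.1 + lastD 0 p.2.1}
      (fun p => wtLast k p.1 * wtLast l p.2.1 * wtFirst h p.2.2) p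

/-- `k_↑`: increase the last entry of an index by `1` (`∅_↑ = ∅`). -/
def upLast : List ℕ → List ℕ
  | [] => []
  | k => k.dropLast ++ [k.getLast! + 1]

/-- `↑k`: increase the first entry of an index by `1` (`↑∅ = ∅`). -/
def upFirst : List ℕ → List ℕ
  | [] => []
  | a :: k => (a + 1) :: k

/-- Connected sum with abstract weights. -/
def Gsh (N : ℕ) {a b c : ℕ} (W1 : (Fin a → ℕ) → ℝ) (W2 : (Fin b → ℕ) → ℝ)
    (W3 : (Fin c → ℕ) → ℝ) : ℝ :=
  ∑' p : (Fin a → ℕ) × (Fin b → ℕ) × (Fin c → ℕ),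
    Set.indicator
      {p : (Fin a → ℕ) × (Fin b → ℕ) × (Fin c → ℕ) |
        (∀ i, 0 < p.1 i) ∧ StrictMono p.1 ∧ (∀ i, 0 < p.2.1 i) ∧ StrictMono p.2.1 ∧
          StrictMono p.2.2 ∧ lastD 0 p.2.2 ≤ N ∧
          headD 0 p.2.2 = lastD 0 p.1 + lastD 0 p.2.1}
      (fun p => W1 p.1 * W2 p.2.1 * W3 p.2.2) p

/-- The weight with all exponents kept. -/
def wtAll (k : List ℕ) (n : Fin k.length → ℕ) : ℝ :=
  ∏ i, ((n i : ℝ) ^ (k.get i))⁻¹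

theorem Zsh_eq_Gsh (N : ℕ) (k l h : List ℕ) (a : ℕ) (e : k.length = a)
    (W1 : (Fin a → ℕ) → ℝ) (W3 : (Fin h.length → ℕ) → ℝ)
    (hW1 : ∀ n : Fin a → ℕ, wtLast k (fun i => n (Fin.cast e i)) = W1 n)
    (hW3 : ∀ r, wtFirst h r = W3 r) :
    Zsh N k l h = Gsh N W1 (wtLast l) W3 := by
  subst e
  have h1 : W1 = wtLast k := by
    funext n; rw [← hW1]; rfl
  have h3 : W3 = wtFirst h := by
    funext n; rw [← hW3]
  subst h1 h3
  rfl

theorem lastD_succ {c : ℕ} (f : Fin (c + 1) → ℕ) : lastD 0 f = f (Fin.last c) := by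
  simp [lastD, Fin.last]

theorem headD_succ {c : ℕ} (f : Fin (c + 1) → ℕ) : headD 0 f = f 0 := by
  simp [headD]

theorem strictMono_snoc {a : ℕ} (n : Fin a → ℕ) (x : ℕ) :
    ((∀ i, 0 < (Fin.snoc n x : Fin (a + 1) → ℕ) i) ∧
      StrictMono (Fin.snoc n x : Fin (a + 1) → ℕ)) ↔
    ((∀ i, 0 < n i) ∧ StrictMono n ∧ lastD 0 n < x) := by
  constructor
  · rintro ⟨h1, h2⟩
    refine ⟨fun i => by simpa using h1 i.castSucc, fun i j hij => ?_, ?_⟩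
    · simpa using h2 (Fin.castSucc_lt_castSucc_iff.mpr hij)
    · cases a with
      | zero => simpa [lastD, Fin.snoc] using h1 (Fin.last 0)
      | succ a =>
        rw [lastD_succ]
        simpa using h2 (Fin.castSucc_lt_last (Fin.last a))
  · rintro ⟨h1, h2, h3⟩
    have key : ∀ i, n i ≤ lastD 0 n := by
      intro i
      cases a with
      | zero => exact i.elim0
      | succ a => rw [lastD_succ]; exact h2.monotone (Fin.le_last i)
    constructor
    · intro i
      refine Fin.lastCases ?_ (fun i => ?_) i
      · simp; omega
      · simpa using h1 i
    · intro i j hij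
      induction j using Fin.lastCases with
      | last =>
        induction i using Fin.lastCases with
        | last => exact absurd hij (lt_irrefl _)
        | cast i => simpa using (key i).trans_lt h3
      | cast j =>
        induction i using Fin.lastCases with
        | last => exact absurd hij (not_lt.mpr (Fin.le_last _))
        | cast i => simpa using h2 (Fin.castSucc_lt_castSucc_iff.mp hij)

theorem strictMono_cons' {c : ℕ} (r : Fin (c + 1) → ℕ) (x : ℕ) :
    StrictMono (Fin.cons x r : Fin (c + 2) → ℕ) ↔ (x < r 0 ∧ StrictMono r) := by
  constructor
  · intro h
    refine ⟨by simpa using h (Fin.succ_pos (0 : Fin (c + 1))), fun i j hij => ?_⟩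
    simpa using h (Fin.succ_lt_succ_iff.mpr hij)
  · rintro ⟨h1, h2⟩ i j hij
    induction j using Fin.cases with
    | zero => exact absurd hij (Fin.not_lt_zero _)
    | succ j =>
      induction i using Fin.cases with
      | zero => simpa using h1.trans_le (h2.monotone (Fin.zero_le j))
      | succ i => simpa using h2 (Fin.succ_lt_succ_iff.mp hij)

theorem Gsh_core (N : ℕ) {a b c : ℕ} (W1 : (Fin a → ℕ) → ℝ) (W2 : (Fin b → ℕ) → ℝ)
    (W3 : (Fin (c + 1) → ℕ) → ℝ) :
    Gsh N (fun n : Fin (a + 1) → ℕ => W1 (Fin.init n)) W2 W3 =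
      Gsh N W1 W2 (fun r : Fin (c + 2) → ℕ => W3 (Fin.tail r)) := by
  unfold Gsh
  let g1 : (Fin a → ℕ) × (Fin b → ℕ) × (Fin (c + 1) → ℕ) →
      (Fin (a + 1) → ℕ) × (Fin b → ℕ) × (Fin (c + 1) → ℕ) :=
    fun p => (Fin.snoc p.1 (p.2.2 0 - lastD 0 p.2.1), p.2.1, p.2.2)
  let g2 : (Fin a → ℕ) × (Fin b → ℕ) × (Fin (c + 1) → ℕ) →
      (Fin a → ℕ) × (Fin b → ℕ) × (Fin (c + 2) → ℕ) :=
    fun p => (p.1, p.2.1, Fin.cons (lastD 0 p.1 + lastD 0 p.2.1) p.2.2)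
  have i1 : Function.Injective g1 := by
    rintro ⟨n, m, r⟩ ⟨n', m', r'⟩ h
    simp only [g1, Prod.mk.injEq] at h
    obtain ⟨h1, h2, h3⟩ := h
    have := congrArg (Fin.init (α := fun _ => ℕ)) h1
    simp only [Fin.init_snoc] at this
    rw [this, h2, h3]
  have i2 : Function.Injective g2 := by
    rintro ⟨n, m, r⟩ ⟨n', m', r'⟩ h
    simp only [g2, Prod.mk.injEq] at h
    obtain ⟨h1, h2, h3⟩ := h
    have := congrArg (Fin.tail (α := fun _ => ℕ)) h3
    simp only [Fin.tail_cons] at this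
    rw [this, h2, h1]
  rw [← i1.tsum_eq, ← i2.tsum_eq]
  · refine tsum_congr fun p => ?_
    obtain ⟨n, m, r⟩ := p
    have hm : (g1 (n, m, r) ∈ {p : (Fin (a + 1) → ℕ) × (Fin b → ℕ) × (Fin (c + 1) → ℕ) |
        (∀ i, 0 < p.1 i) ∧ StrictMono p.1 ∧ (∀ i, 0 < p.2.1 i) ∧ StrictMono p.2.1 ∧
          StrictMono p.2.2 ∧ lastD 0 p.2.2 ≤ N ∧
          headD 0 p.2.2 = lastD 0 p.1 + lastD 0 p.2.1}) ↔
        (g2 (n, m, r) ∈ {p : (Fin a → ℕ) × (Fin b → ℕ) × (Fin (c + 2) → ℕ) |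
        (∀ i, 0 < p.1 i) ∧ StrictMono p.1 ∧ (∀ i, 0 < p.2.1 i) ∧ StrictMono p.2.1 ∧
          StrictMono p.2.2 ∧ lastD 0 p.2.2 ≤ N ∧
          headD 0 p.2.2 = lastD 0 p.1 + lastD 0 p.2.1}) := by
      simp only [g1, g2, Set.mem_setOf_eq]
      rw [← and_assoc, strictMono_snoc, strictMono_cons', lastD_succ, lastD_succ, lastD_succ,
        headD_succ, headD_succ, ← Fin.succ_last, Fin.cons_succ, Fin.cons_zero, Fin.snoc_last]
      constructor
      · rintro ⟨⟨h1, h2, h3⟩, h4, h5, h6, h7, h8⟩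
        exact ⟨h1, h2, h4, h5, ⟨by omega, h6⟩, h7, rfl⟩
      · rintro ⟨h1, h2, h4, h5, ⟨h3, h6⟩, h7, -⟩
        exact ⟨⟨h1, h2, by omega⟩, h4, h5, h6, h7, by omega⟩
    simp only [Set.indicator, hm]
    simp [g1, g2]
  · rintro ⟨n, m, r⟩ hp
    obtain ⟨-, -, -, -, -, -, h⟩ := Set.mem_of_indicator_ne_zero hp
    refine ⟨(n, m, Fin.tail r), ?_⟩
    simp only [headD_succ] at h
    simp only [g2]
    rw [← h, Fin.cons_self_tail]
  · rintro ⟨n, m, r⟩ hp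
    obtain ⟨-, -, -, -, -, -, h⟩ := Set.mem_of_indicator_ne_zero hp
    refine ⟨(Fin.init n, m, r), ?_⟩
    simp only [headD_succ, lastD_succ] at h
    simp only [g1]
    have : r 0 - lastD 0 m = n (Fin.last a) := by omega
    rw [this, Fin.snoc_init_self]

theorem wtLast_append (k : List ℕ) (x : ℕ) (e : (k ++ [x]).length = k.length + 1)
    (n : Fin (k.length + 1) → ℕ) :
    wtLast (k ++ [x]) (fun i => n (Fin.cast e i)) =
      wtAll k (Fin.init n) * ((n (Fin.last _) : ℝ) ^ (x - 1))⁻¹ := by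
  unfold wtLast wtAll
  rw [← (finCongr e.symm).prod_comp, Fin.prod_univ_castSucc]
  congr 1
  · refine Finset.prod_congr rfl fun i _ => ?_
    have : i.1 ≠ k.length := i.2.ne
    simp [this, Fin.init]
  · simp

theorem wtAll_append (k : List ℕ) (x : ℕ) (e : (k ++ [x]).length = k.length + 1)
    (n : Fin (k.length + 1) → ℕ) :
    wtAll (k ++ [x]) (fun i => n (Fin.cast e i)) =
      wtAll k (Fin.init n) * ((n (Fin.last _) : ℝ) ^ x)⁻¹ := by
  unfold wtAll
  rw [← (finCongr e.symm).prod_comp, Fin.prod_univ_castSucc]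
  congr 1
  · refine Finset.prod_congr rfl fun i _ => ?_
    simp [Fin.init]
  · simp

theorem upLast_append (k : List ℕ) (x : ℕ) : upLast (k ++ [x]) = k ++ [x + 1] := by
  unfold upLast
  split
  · simp_all
  · simp [List.getLast!_eq_getLast?_getD]

theorem wtLast_upLast (k : List ℕ) (e : (upLast k).length = k.length) (n : Fin k.length → ℕ) :
    wtLast (upLast k) (fun i => n (Fin.cast e i)) = wtAll k n := by
  rcases List.eq_nil_or_concat' k with rfl | ⟨k, x, rfl⟩
  · exact (Fin.prod_univ_zero _).trans (Fin.prod_univ_zero _).symm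
  · have e1 : (k ++ [x]).length = k.length + 1 := by simp
    have key : ∀ (k' : List ℕ) (_ : k' = k ++ [x + 1]) (e : k'.length = (k ++ [x]).length),
        wtLast k' (fun i => n (Fin.cast e i)) = wtAll (k ++ [x]) n := by
      rintro _ rfl e
      have h1 := wtLast_append k (x + 1) (by simp) (fun i => n (Fin.cast e1.symm i))
      have h2 := wtAll_append k x (by simp) (fun i => n (Fin.cast e1.symm i))
      simp only [Nat.add_sub_cancel] at h1
      exact h1.trans h2.symm
    exact key _ (upLast_append k x) e

theorem upLast_length (k : List ℕ) : (upLast k).length = k.length := by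
  rcases List.eq_nil_or_concat k with rfl | ⟨k, x, rfl⟩
  · rfl
  · simp [upLast_append]

/-- **Transport relation for the shuffle connected sum:**
`Z^sh_N(k_→; l; ↑h) = Z^sh_N(k_↑; l; ←h)`
for (possibly empty) indices `k`, `l`, a nonempty index `h`, and `N ≥ 1`.
Here `k_→ = k ++ [1]` and `←h = 1 :: h`. -/
theorem Zsh_transport_arrow (N : ℕ) (hN : 0 < N) (k l h : List ℕ)
    (hk1 : ∀ i ∈ k, 1 ≤ i) (hl1 : ∀ i ∈ l, 1 ≤ i)
    (hh : h ≠ []) (hh1 : ∀ i ∈ h, 1 ≤ i) :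
    Zsh N (k ++ [1]) l (upFirst h) = Zsh N (upLast k) l (1 :: h) := by
  obtain ⟨x, t, rfl⟩ := List.exists_cons_of_ne_nil hh
  have hlen : (k ++ [1]).length = k.length + 1 := by simp
  rw [Zsh_eq_Gsh N (k ++ [1]) l (upFirst (x :: t)) (k.length + 1) hlen
      (fun n => wtAll k (Fin.init n)) (wtAll (x :: t))
      (fun n => by simpa using wtLast_append k 1 hlen n)
      (fun r => by
        unfold wtFirst wtAll
        refine Finset.prod_congr rfl fun i _ => ?_
        refine Fin.cases (motive := fun i : Fin (t.length + 1) =>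
          ((r i : ℝ) ^ (if i.1 = 0 then ((x + 1) :: t).get i - 1 else ((x + 1) :: t).get i))⁻¹ =
            ((r i : ℝ) ^ ((x :: t).get i))⁻¹) ?_ (fun i => ?_) i
        · simp
        · simp),
    Zsh_eq_Gsh N (upLast k) l (1 :: x :: t) k.length (upLast_length k)
      (wtAll k) (fun r => wtAll (x :: t) (Fin.tail r))
      (fun n => wtLast_upLast k _ n)
      (fun r => by
        unfold wtFirst wtAll
        refine (Fin.prod_univ_succ (n := (x :: t).length) _).trans ?_
        simp [Fin.tail])]
  exact Gsh_core N (c := t.length) (wtAll k) (wtLast l) (wtAll (x :: t))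
end
end

section
/- Transport relation for Hoffman's connected sum: let k be a nonempty index and l a nonempty admissible index. Then, as an identity in [0,∞], Z^H(k_→; l) = Z^H(k; ←l) + T(k; ←l). -/
open scoped Classical ENNReal

noncomputable section

/-- Hoffman's connected sum `Z^H(k; l)`: the sum in `[0,∞]` of
`(∏_{i<a} nᵢ^(-kᵢ)) · nₐ^(-(kₐ-1)) · (m₁ - nₐ)⁻¹ · ∏_j m_j^(-l_j)`
over `0 < n₁ < ⋯ < nₐ < m₁ < ⋯ < m_b`. -/
def ZH (k l : List ℕ) : ℝ≥0∞ :=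
  ∑' p : (Fin k.length → ℕ) × (Fin l.length → ℕ),
    Set.indicator
      {p : (Fin k.length → ℕ) × (Fin l.length → ℕ) |
        (∀ i, 0 < p.1 i) ∧ StrictMono p.1 ∧ StrictMono p.2 ∧
          lastD 0 p.1 < headD 0 p.2}
      (fun p =>
        (∏ i, ((p.1 i : ℝ≥0∞) ^ (if i.1 = k.length - 1 then k.get i - 1 else k.get i))⁻¹) *
          ((headD 0 p.2 - lastD 0 p.1 : ℕ) : ℝ≥0∞)⁻¹ *
          ∏ j, ((p.2 j : ℝ≥0∞) ^ l.get j)⁻¹) p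

/-- The multiple-zeta-type series `T(k; l)` of the concatenated index `(k, l)`:
the sum in `[0,∞]` of `(∏ nᵢ^(-kᵢ)) · (∏ m_j^(-l_j))` over
`0 < n₁ < ⋯ < nₐ < m₁ < ⋯ < m_b`. -/
def Tser (k l : List ℕ) : ℝ≥0∞ :=
  ∑' p : (Fin k.length → ℕ) × (Fin l.length → ℕ),
    Set.indicator
      {p : (Fin k.length → ℕ) × (Fin l.length → ℕ) |
        (∀ i, 0 < p.1 i) ∧ StrictMono p.1 ∧ StrictMono p.2 ∧
          lastD 0 p.1 < headD 0 p.2}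
      (fun p => (∏ i, ((p.1 i : ℝ≥0∞) ^ k.get i)⁻¹) * ∏ j, ((p.2 j : ℝ≥0∞) ^ l.get j)⁻¹) p

lemma ZH_eq (k l : List ℕ) (a b : ℕ) (ha : k.length = a + 1) (hb : l.length = b + 1) :
    ZH k l = ∑' p : (Fin (a + 1) → ℕ) × (Fin (b + 1) → ℕ),
      if (∀ i, 0 < p.1 i) ∧ StrictMono p.1 ∧ StrictMono p.2 ∧ p.1 (Fin.last a) < p.2 0 then
        (∏ i : Fin (a + 1), ((p.1 i : ℝ≥0∞) ^ (if i.1 = a then k.getD i.1 0 - 1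
          else k.getD i.1 0))⁻¹) *
          ((p.2 0 - p.1 (Fin.last a) : ℕ) : ℝ≥0∞)⁻¹ *
          ∏ j : Fin (b + 1), ((p.2 j : ℝ≥0∞) ^ l.getD j.1 0)⁻¹
      else 0 := by
  unfold ZH
  have e1 : ∀ i : Fin k.length, k.get i = k.getD i.1 0 := fun i => by simp
  have e2 : ∀ i : Fin l.length, l.get i = l.getD i.1 0 := fun i => by simp
  simp only [e1, e2]
  clear e1 e2
  generalize (fun i : ℕ => k.getD i 0) = f
  generalize k.length = c at *
  generalize l.length = d at *
  subst ha hb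
  refine tsum_congr fun p => ?_
  simp only [Set.indicator_apply, Set.mem_ofPred_eq]
  rfl

lemma Tser_eq (k l : List ℕ) (a b : ℕ) (ha : k.length = a + 1) (hb : l.length = b + 1) :
    Tser k l = ∑' p : (Fin (a + 1) → ℕ) × (Fin (b + 1) → ℕ),
      if (∀ i, 0 < p.1 i) ∧ StrictMono p.1 ∧ StrictMono p.2 ∧ p.1 (Fin.last a) < p.2 0 then
        (∏ i : Fin (a + 1), ((p.1 i : ℝ≥0∞) ^ (k.getD i.1 0))⁻¹) *
          ∏ j : Fin (b + 1), ((p.2 j : ℝ≥0∞) ^ l.getD j.1 0)⁻¹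
      else 0 := by
  unfold Tser
  have e1 : ∀ i : Fin k.length, k.get i = k.getD i.1 0 := fun i => by simp
  have e2 : ∀ i : Fin l.length, l.get i = l.getD i.1 0 := fun i => by simp
  simp only [e1, e2]
  clear e1 e2
  generalize k.length = c at *
  generalize l.length = d at *
  subst ha hb
  refine tsum_congr fun p => ?_
  simp only [Set.indicator_apply, Set.mem_ofPred_eq]
  rfl

lemma strictMono_snoc_iff {a : ℕ} (n : Fin (a + 1) → ℕ) (q : ℕ) :
    StrictMono (Fin.snoc n q : Fin (a + 2) → ℕ) ↔ StrictMono n ∧ n (Fin.last a) < q := by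
  rw [Fin.strictMono_iff_lt_succ, Fin.strictMono_iff_lt_succ]
  rw [Fin.forall_fin_succ' (P := fun i : Fin (a + 1) => (Fin.snoc n q : Fin (a + 2) → ℕ) i.castSucc
    < (Fin.snoc n q : Fin (a + 2) → ℕ) i.succ)]
  simp only [Fin.snoc_castSucc, Fin.succ_last, Fin.snoc_last, Fin.succ_castSucc]

lemma strictMono_cons_iff {a : ℕ} (n : Fin (a + 1) → ℕ) (q : ℕ) :
    StrictMono (Fin.cons q n : Fin (a + 2) → ℕ) ↔ StrictMono n ∧ q < n 0 := by
  rw [Fin.strictMono_iff_lt_succ, Fin.strictMono_iff_lt_succ]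
  rw [Fin.forall_fin_succ (P := fun i : Fin (a + 1) => (Fin.cons q n : Fin (a + 2) → ℕ) i.castSucc
    < (Fin.cons q n : Fin (a + 2) → ℕ) i.succ)]
  simp only [Fin.castSucc_zero, Fin.cons_zero, Fin.cons_succ, Fin.castSucc_succ]
  tauto

lemma tsum_snoc {a : ℕ} {β : Type*} (F : (Fin (a + 1) → ℕ) × β → ℝ≥0∞) :
    ∑' p, F p = ∑' p : (Fin a → ℕ) × β, ∑' q : ℕ, F (Fin.snoc p.1 q, p.2) := by
  rw [ENNReal.tsum_prod', ENNReal.tsum_prod', ← (Fin.snocEquiv (fun _ => ℕ)).tsum_eq,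
    ENNReal.tsum_prod', ENNReal.tsum_comm]
  refine tsum_congr fun n => ?_
  rw [ENNReal.tsum_comm]
  rfl

lemma tsum_cons {a : ℕ} {β : Type*} (F : β × (Fin (a + 1) → ℕ) → ℝ≥0∞) :
    ∑' p, F p = ∑' p : β × (Fin a → ℕ), ∑' q : ℕ, F (p.1, Fin.cons q p.2) := by
  rw [ENNReal.tsum_prod', ENNReal.tsum_prod']
  refine tsum_congr fun n => ?_
  rw [← (Fin.consEquiv (fun _ => ℕ)).tsum_eq, ENNReal.tsum_prod', ENNReal.tsum_comm]
  rfl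

lemma tsum_reflect (x y : ℕ) (f : ℕ → ℝ≥0∞) :
    ∑' q : ℕ, (if x < q ∧ q < y then f (y - q) else 0) =
      ∑' q : ℕ, (if x < q ∧ q < y then f (q - x) else 0) := by
  rw [tsum_eq_sum (s := Finset.Ioo x y) (by intro q hq; simp at hq; simp; omega),
    tsum_eq_sum (s := Finset.Ioo x y) (by intro q hq; simp at hq; simp; omega)]
  refine Finset.sum_nbij' (fun q => x + y - q) (fun q => x + y - q) ?_ ?_ ?_ ?_ ?_
  · intro q hq; simp at *; omega
  · intro q hq; simp at *; omega
  · intro q hq; simp at *; omega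
  · intro q hq; simp at *; omega
  · intro q hq
    simp only [Finset.mem_Ioo] at hq
    rw [if_pos hq, if_pos (by omega)]
    congr 1
    omega

lemma key_frac (x q e : ℕ) (hx : 0 < x) (hq : x < q) (he : 1 ≤ e) :
    ((x : ℝ≥0∞) ^ e)⁻¹ * ((q - x : ℕ) : ℝ≥0∞)⁻¹ =
      ((x : ℝ≥0∞) ^ (e - 1))⁻¹ * ((q - x : ℕ) : ℝ≥0∞)⁻¹ * (q : ℝ≥0∞)⁻¹
        + ((x : ℝ≥0∞) ^ e)⁻¹ * (q : ℝ≥0∞)⁻¹ := by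
  obtain ⟨e, rfl⟩ : ∃ e', e = e' + 1 := ⟨e - 1, by omega⟩
  obtain ⟨d, rfl⟩ : ∃ d, q = x + d := ⟨q - x, by omega⟩
  have hd : 0 < d := by omega
  simp only [Nat.add_sub_cancel, Nat.add_sub_cancel_left]
  have c : ∀ n : ℕ, 0 < n → (n : ℝ≥0∞)⁻¹ = ENNReal.ofReal ((n : ℝ)⁻¹) := fun n hn => by
    rw [ENNReal.ofReal_inv_of_pos (by exact_mod_cast hn), ENNReal.ofReal_natCast]
  simp only [← Nat.cast_pow]
  rw [c _ (by positivity), c _ (by positivity), c _ (by positivity), c _ (by positivity)]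
  rw [← ENNReal.ofReal_mul (by positivity), ← ENNReal.ofReal_mul (by positivity),
    ← ENNReal.ofReal_mul (by positivity), ← ENNReal.ofReal_mul (by positivity),
    ← ENNReal.ofReal_add (by positivity) (by positivity)]
  congr 1
  have : (0:ℝ) < x := by exact_mod_cast hx
  have : (0:ℝ) < d := by exact_mod_cast hd
  push_cast
  field_simp
  ring

/-- **Transport relation for Hoffman's connected sum:**
for a nonempty index `k` and a nonempty admissible index `l`,
`Z^H(k_→; l) = Z^H(k; ←l) + T(k; ←l)` in `[0,∞]`,
where `k_→ = k ++ [1]` and `←l = 1 :: l`. -/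
theorem ZH_transport_arrow (k l : List ℕ)
    (hk : k ≠ []) (hk1 : ∀ i ∈ k, 1 ≤ i)
    (hl : l ≠ []) (hl1 : ∀ i ∈ l, 1 ≤ i) (hla : 2 ≤ l.getLast hl) :
    ZH (k ++ [1]) l = ZH k (1 :: l) + Tser k (1 :: l) := by
  obtain ⟨a, ha⟩ : ∃ a, k.length = a + 1 :=
    ⟨k.length - 1, by have := List.length_pos_iff.2 hk; omega⟩
  obtain ⟨b, hb⟩ : ∃ b, l.length = b + 1 :=
    ⟨l.length - 1, by have := List.length_pos_iff.2 hl; omega⟩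
  have hka : 1 ≤ k.getD a 0 := by
    have h : a < k.length := by omega
    rw [List.getD_eq_getElem _ _ h]
    exact hk1 _ (List.getElem_mem h)
  rw [ZH_eq (k ++ [1]) l (a + 1) b (by simp [ha]) hb,
    ZH_eq k (1 :: l) a (b + 1) ha (by simp [hb]),
    Tser_eq k (1 :: l) a (b + 1) ha (by simp [hb]),
    ← ENNReal.tsum_add, tsum_snoc (a := a + 1), tsum_cons (a := b + 1)]
  refine tsum_congr fun p => ?_
  obtain ⟨n, m⟩ := p
  simp only [strictMono_snoc_iff, strictMono_cons_iff, Fin.snoc_last, Fin.cons_zero]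
  by_cases hA : (∀ i, 0 < n i) ∧ StrictMono n ∧ StrictMono m
  swap
  · trans 0
    · refine ENNReal.tsum_eq_zero.2 fun q => if_neg ?_
      rintro ⟨h1, h2, h3, h4⟩
      exact hA ⟨fun i => by simpa using h1 i.castSucc, h2.1, h3⟩
    · symm
      refine ENNReal.tsum_eq_zero.2 fun q => ?_
      rw [if_neg, if_neg, add_zero]
      all_goals
        rintro ⟨h1, h2, h3, h4⟩
        exact hA ⟨h1, h2, h3.1⟩
  obtain ⟨h1, h2, h3⟩ := hA
  set P := ∏ i : Fin (a + 1), ((n i : ℝ≥0∞) ^ k.getD i.1 0)⁻¹ with hP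
  set Q := ∏ j : Fin (b + 1), ((m j : ℝ≥0∞) ^ l.getD j.1 0)⁻¹ with hQ
  trans P * Q * ∑' q : ℕ, (if n (Fin.last a) < q ∧ q < m 0 then ((m 0 - q : ℕ) : ℝ≥0∞)⁻¹ else 0)
  · rw [← ENNReal.tsum_mul_left]
    refine tsum_congr fun q => ?_
    by_cases hq : n (Fin.last a) < q ∧ q < m 0
    · rw [if_pos, if_pos hq]
      · rw [Fin.prod_univ_castSucc]
        have : ∀ i : Fin (a + 1), (k ++ [1]).getD i.1 0 = k.getD i.1 0 := fun i =>
          List.getD_append _ _ _ _ (by omega)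
        have e : (k ++ [1]).getD (a + 1) 0 = 1 := by
          rw [List.getD_append_right _ _ _ _ (by omega)]; simp [ha]
        have e2 : ∀ i : Fin (a + 1), ¬ (i.1 = a + 1) := fun i => by omega
        simp only [Fin.snoc_castSucc, Fin.snoc_last, Fin.val_castSucc, Fin.val_last, this, e, e2,
          if_true, if_false, Nat.sub_self, pow_zero, inv_one, mul_one]
        rw [← hP]
        ring
      · refine ⟨?_, ⟨h2, hq.1⟩, h3, hq.2⟩
        intro i
        refine Fin.lastCases ?_ (fun j => ?_) i
        · simp only [Fin.snoc_last]; omega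
        · simpa using h1 j
    · rw [if_neg, if_neg hq, mul_zero]
      rintro ⟨_, h4, _, h5⟩
      exact hq ⟨h4.2, h5⟩
  · rw [tsum_reflect _ _ (fun t => (t : ℝ≥0∞)⁻¹), ← ENNReal.tsum_mul_left]
    refine tsum_congr fun q => ?_
    by_cases hq : n (Fin.last a) < q ∧ q < m 0
    · have hc : (∀ i, 0 < n i) ∧ StrictMono n ∧ (StrictMono m ∧ q < m 0) ∧ n (Fin.last a) < q :=
        ⟨h1, h2, ⟨h3, hq.2⟩, hq.1⟩
      rw [if_pos hq, if_pos hc, if_pos hc]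
      have hR : ∏ j : Fin (b + 1 + 1), (((Fin.cons q m : Fin (b + 1 + 1) → ℕ) j : ℝ≥0∞) ^
          (1 :: l).getD j.1 0)⁻¹ = (q : ℝ≥0∞)⁻¹ * Q := by
        rw [Fin.prod_univ_succ]
        simp [hQ]
      have e2 : ∀ i : Fin a, ¬ (i.1 = a) := fun i => by omega
      rw [hR, hP, Fin.prod_univ_castSucc, Fin.prod_univ_castSucc]
      simp only [Fin.val_castSucc, Fin.val_last, e2, if_true, if_false]
      generalize ∏ i : Fin a, ((n i.castSucc : ℝ≥0∞) ^ k.getD i.1 0)⁻¹ = S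
      have := key_frac (n (Fin.last a)) q (k.getD a 0) (h1 _) hq.1 hka
      rw [mul_assoc, mul_comm Q, ← mul_assoc, mul_assoc S, this]
      ring
    · rw [if_neg hq, if_neg, if_neg, mul_zero, add_zero]
      all_goals
        rintro ⟨_, _, h5, h4⟩
        exact hq ⟨h4, h5.2⟩
end
end

section
/- Transport relation for the duality connected sum: for all nonnegative integers n,m, every nonempty index k, and every (possibly empty) index l, one has Z^D_{n,m}(k_↑; l) = Z^D_{n,m}(k; l_→) as an identity in [0,∞]. -/
open scoped Classical ENNReal

noncomputable section

/-- The duality connected sum `Z^D_{n,m}(k; l)`: the sum in `[0,∞]` of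
`(∏ nᵢ^(-kᵢ)) · (∏ m_j^(-l_j)) · nₐ!·m_b!/(nₐ+m_b)!` over
`n < n₁ < ⋯ < nₐ` and `m < m₁ < ⋯ < m_b` (with `nₐ := n` if `a = 0`,
`m_b := m` if `b = 0`). -/
def ZD (n m : ℕ) (k l : List ℕ) : ℝ≥0∞ :=
  ∑' p : (Fin k.length → ℕ) × (Fin l.length → ℕ),
    Set.indicator
      {p : (Fin k.length → ℕ) × (Fin l.length → ℕ) |
        (∀ i, n < p.1 i) ∧ StrictMono p.1 ∧ (∀ j, m < p.2 j) ∧ StrictMono p.2}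
      (fun p =>
        (∏ i, ((p.1 i : ℝ≥0∞) ^ k.get i)⁻¹) * (∏ j, ((p.2 j : ℝ≥0∞) ^ l.get j)⁻¹) *
          ((Nat.factorial (lastD n p.1) : ℝ≥0∞) * (Nat.factorial (lastD m p.2) : ℝ≥0∞) /
            (Nat.factorial (lastD n p.1 + lastD m p.2) : ℝ≥0∞))) p

open Filter Topology in
theorem real_tele (N M : ℕ) :
    HasSum (fun x : ℕ => if M < x then (x : ℝ)⁻¹ * (((N+1).factorial : ℝ) * x.factorial / (N+1+x).factorial) else 0)
      (((N+1 : ℕ) : ℝ)⁻¹ * (((N+1).factorial : ℝ) * M.factorial / (N+1+M).factorial)) := by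
  rw [hasSum_iff_tendsto_nat_of_nonneg (by intro i; split_ifs <;> positivity)]
  rw [← tendsto_add_atTop_iff_nat (M+1)]
  set f : ℕ → ℝ := fun M => ((N+1 : ℕ) : ℝ)⁻¹ * (((N+1).factorial : ℝ) * M.factorial / (N+1+M).factorial) with hf
  have hstep : ∀ x, ((x+1 : ℕ) : ℝ)⁻¹ * (((N+1).factorial : ℝ) * (x+1).factorial / (N+1+(x+1)).factorial) = f x - f (x+1) := by
    intro x
    have h1 : (N+1+(x+1)).factorial = (N+1+x+1) * (N+1+x).factorial := Nat.factorial_succ _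
    have h2 : ((N+1+x).factorial : ℝ) ≠ 0 := by positivity
    have h3 : (N:ℝ)+1 ≠ 0 := by positivity
    have h4 : (x:ℝ)+1 ≠ 0 := by positivity
    have h5 : (N:ℝ)+1+x+1 ≠ 0 := by positivity
    simp only [hf, h1, Nat.factorial_succ x]
    push_cast
    field_simp
    ring
  have hsum : ∀ j, ∑ x ∈ Finset.range (j + (M+1)), (if M < x then (x : ℝ)⁻¹ * (((N+1).factorial : ℝ) * x.factorial / (N+1+x).factorial) else 0) = f M - f (M + j) := by
    intro j
    induction j with
    | zero =>
      rw [Finset.sum_eq_zero]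
      · simp
      · intro x hx
        rw [if_neg]
        simp at hx; omega
    | succ j ih =>
      rw [show j + 1 + (M+1) = (j + (M+1)) + 1 by ring, Finset.sum_range_succ, ih, if_pos (by omega),
        show j + (M+1) = (M + j) + 1 by ring, hstep, ← add_assoc]
      ring
  simp_rw [hsum]
  have hlim : Tendsto (fun j => f (M + j)) atTop (𝓝 0) := by
    have h0 : Tendsto f atTop (𝓝 0) := by
      refine squeeze_zero (fun x => by simp only [hf]; positivity) (fun x => ?_) (tendsto_one_div_add_atTop_nhds_zero_nat (𝕜 := ℝ))
      have h := Nat.le_of_dvd (Nat.factorial_pos _) (Nat.factorial_mul_factorial_dvd_factorial_add N (x+1))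
      have h' : ((N.factorial : ℝ) * ((x+1) * x.factorial)) ≤ ((N+1+x).factorial : ℝ) := by
        rw [show N + 1 + x = N + (x+1) by ring]
        rw [Nat.factorial_succ x] at h
        exact_mod_cast h
      have h2 : (0:ℝ) < ((N+1+x).factorial : ℝ) := by positivity
      have h3 : (N:ℝ)+1 ≠ 0 := by positivity
      have h4 : (0:ℝ) < (x:ℝ)+1 := by positivity
      simp only [hf, Nat.factorial_succ N]
      push_cast
      have e : ((N:ℝ)+1)⁻¹ * (((N:ℝ)+1) * N.factorial * x.factorial / (N+1+x).factorial) = N.factorial * x.factorial / (N+1+x).factorial := by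
        field_simp
      rw [e, div_le_div_iff₀ h2 h4]
      linarith
    exact h0.comp (tendsto_atTop_mono (fun j => Nat.le_add_left j M) tendsto_id)
  have hfin := (tendsto_const_nhds (x := f M)).sub hlim
  rw [sub_zero] at hfin
  exact hfin

theorem ofReal_aux (c N x : ℕ) (hc : 0 < c) :
    ENNReal.ofReal ((c : ℝ)⁻¹ * ((N.factorial : ℝ) * x.factorial / (N+x).factorial)) =
    (c : ℝ≥0∞)⁻¹ * ((N.factorial : ℝ≥0∞) * x.factorial / (N+x).factorial) := by
  rw [ENNReal.ofReal_mul (by positivity), ENNReal.ofReal_inv_of_pos (by positivity),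
    ENNReal.ofReal_div_of_pos (by positivity), ENNReal.ofReal_mul (by positivity)]
  simp

theorem enn_tele (N M : ℕ) (hN : 0 < N) :
    ∑' x : ℕ, (if M < x then (x : ℝ≥0∞)⁻¹ * ((N.factorial : ℝ≥0∞) * x.factorial / (N+x).factorial) else 0)
     = (N : ℝ≥0∞)⁻¹ * ((N.factorial : ℝ≥0∞) * M.factorial / (N+M).factorial) := by
  obtain ⟨N, rfl⟩ : ∃ k, N = k + 1 := ⟨N - 1, by omega⟩
  have h := real_tele N M
  rw [← ofReal_aux _ _ _ hN, ← h.tsum_eq, ENNReal.ofReal_tsum_of_nonneg _ h.summable]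
  · refine tsum_congr fun x => ?_
    split_ifs with hx
    · rw [ofReal_aux _ _ _ (by omega)]
    · simp
  · intro i; split_ifs <;> positivity

def ZDf (n m : ℕ) {a b : ℕ} (k : Fin a → ℕ) (l : Fin b → ℕ) : ℝ≥0∞ :=
  ∑' p : (Fin a → ℕ) × (Fin b → ℕ),
    Set.indicator
      {p : (Fin a → ℕ) × (Fin b → ℕ) |
        (∀ i, n < p.1 i) ∧ StrictMono p.1 ∧ (∀ j, m < p.2 j) ∧ StrictMono p.2}
      (fun p =>
        (∏ i, ((p.1 i : ℝ≥0∞) ^ k i)⁻¹) * (∏ j, ((p.2 j : ℝ≥0∞) ^ l j)⁻¹) *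
          ((Nat.factorial (lastD n p.1) : ℝ≥0∞) * (Nat.factorial (lastD m p.2) : ℝ≥0∞) /
            (Nat.factorial (lastD n p.1 + lastD m p.2) : ℝ≥0∞))) p

theorem ZD_eq (n m : ℕ) (k l : List ℕ) : ZD n m k l = ZDf n m k.get l.get := rfl

theorem ZDf_congr (n m : ℕ) {a b a' b' : ℕ} (k : Fin a → ℕ) (l : Fin b → ℕ)
    (k' : Fin a' → ℕ) (l' : Fin b' → ℕ) (ha : a' = a) (hb : b' = b)
    (hk : ∀ i, k' i = k (Fin.cast ha i)) (hl : ∀ i, l' i = l (Fin.cast hb i)) :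
    ZDf n m k' l' = ZDf n m k l := by
  subst ha hb
  have : k' = k := funext hk
  have : l' = l := funext hl
  subst_vars
  rfl

theorem lastD_snoc {c : ℕ} (d : ℕ) (q : Fin c → ℕ) (x : ℕ) :
    lastD d (Fin.snoc q x : Fin (c+1) → ℕ) = x := by
  have : (⟨c + 1 - 1, Nat.sub_lt (Nat.succ_pos c) Nat.one_pos⟩ : Fin (c+1)) = Fin.last c := by
    ext; simp
  simp [lastD]
  exact Fin.snoc_last (α := fun _ => ℕ) x q

theorem lastD_last {c : ℕ} (d : ℕ) (q : Fin (c+1) → ℕ) :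
    lastD d q = q (Fin.last c) := by
  simp [lastD]; rfl

theorem cond_snoc {c : ℕ} (d : ℕ) (q : Fin c → ℕ) (x : ℕ) :
    ((∀ j, d < (Fin.snoc q x : Fin (c+1) → ℕ) j) ∧ StrictMono (Fin.snoc q x : Fin (c+1) → ℕ)) ↔
      ((∀ j, d < q j) ∧ StrictMono q) ∧ lastD d q < x := by
  constructor
  · rintro ⟨h1, h2⟩
    have h1' : ∀ j, d < q j := fun j => by simpa using h1 j.castSucc
    refine ⟨⟨h1', fun i j hij => ?_⟩, ?_⟩
    · simpa using h2 (Fin.castSucc_lt_castSucc_iff.2 hij)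
    · cases c with
      | zero => simpa [lastD, Fin.snoc] using h1 0
      | succ c =>
        rw [lastD_last]
        simpa using h2 (Fin.castSucc_lt_last (Fin.last c))
  · rintro ⟨⟨h1, h2⟩, h3⟩
    have hle : ∀ j, q j < x := by
      cases c with
      | zero => exact fun j => j.elim0
      | succ c =>
        rw [lastD_last] at h3
        exact fun j => (h2.monotone (Fin.le_last j)).trans_lt h3
    have hd : d < x := by
      cases c with
      | zero => simpa [lastD] using h3
      | succ c => exact (h1 0).trans (hle 0)
    refine ⟨fun j => ?_, fun i j hij => ?_⟩
    · refine Fin.lastCases ?_ (fun j => ?_) j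
      · simpa using hd
      · simpa using h1 j
    · induction j using Fin.lastCases with
      | last =>
        induction i using Fin.lastCases with
        | last => exact absurd hij (lt_irrefl _)
        | cast i => simpa using hle i
      | cast j =>
        induction i using Fin.lastCases with
        | last => exact absurd hij (not_lt.2 (Fin.le_last _))
        | cast i => simpa using h2 (Fin.castSucc_lt_castSucc_iff.1 hij)

theorem ZDf_transport (n m : ℕ) {a b : ℕ} (k : Fin a → ℕ) (x : ℕ) (l : Fin b → ℕ) :
    ZDf n m (Fin.snoc k (x+1) : Fin (a+1) → ℕ) l =
      ZDf n m (Fin.snoc k x : Fin (a+1) → ℕ) (Fin.snoc l 1 : Fin (b+1) → ℕ) := by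
  unfold ZDf
  rw [ENNReal.tsum_prod', ENNReal.tsum_prod']
  refine tsum_congr fun p => ?_
  rw [← (Fin.snocEquiv (fun _ : Fin (b+1) => ℕ)).tsum_eq, ENNReal.tsum_prod', ENNReal.tsum_comm]
  refine tsum_congr fun q => ?_
  have hsn : ∀ y : ℕ, (Fin.snocEquiv (fun _ : Fin (b+1) => ℕ)) (y, q) = (Fin.snoc q y : Fin (b+1) → ℕ) := fun y => rfl
  simp only [hsn, Set.indicator_apply, Set.mem_ofPred_eq, cond_snoc, lastD_snoc]
  by_cases hp : (∀ i, n < p i) ∧ StrictMono p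
  swap
  · rw [if_neg (fun h => hp ⟨h.1, h.2.1⟩)]
    symm
    rw [ENNReal.tsum_eq_zero]
    intro y
    rw [if_neg (fun h => hp ⟨h.1, h.2.1⟩)]
  by_cases hq : (∀ i, m < q i) ∧ StrictMono q
  swap
  · rw [if_neg (fun h => hq h.2.2)]
    symm
    rw [ENNReal.tsum_eq_zero]
    intro y
    rw [if_neg (fun h => hq h.2.2.1)]
  rw [if_pos ⟨hp.1, hp.2, hq⟩]
  set N := lastD n p with hN
  have hNp : N = p (Fin.last a) := lastD_last n p
  have hN0 : 0 < N := by rw [hNp]; exact (Nat.zero_le n).trans_lt (hp.1 _)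
  set A : ℝ≥0∞ := ∏ i, ((p i : ℝ≥0∞) ^ (Fin.snoc k x : Fin (a+1) → ℕ) i)⁻¹ with hA
  set B : ℝ≥0∞ := ∏ j, ((q j : ℝ≥0∞) ^ l j)⁻¹ with hB
  have hA' : ∏ i, ((p i : ℝ≥0∞) ^ (Fin.snoc k (x+1) : Fin (a+1) → ℕ) i)⁻¹ = A * (N : ℝ≥0∞)⁻¹ := by
    rw [hA, Fin.prod_univ_castSucc, Fin.prod_univ_castSucc]
    simp only [Fin.snoc_castSucc, Fin.snoc_last, ← hNp]
    rw [pow_succ, ENNReal.mul_inv (by simp) (by simp), mul_assoc]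
  have hB' : ∀ y : ℕ, ∏ j, (((Fin.snoc q y : Fin (b+1) → ℕ) j : ℝ≥0∞) ^ (Fin.snoc l 1 : Fin (b+1) → ℕ) j)⁻¹ = B * (y : ℝ≥0∞)⁻¹ := by
    intro y
    rw [hB, Fin.prod_univ_castSucc]
    simp
  rw [hA']
  simp only [hB']
  trans A * B * ((N : ℝ≥0∞)⁻¹ * ((N.factorial : ℝ≥0∞) * (lastD m q).factorial / (N+lastD m q).factorial))
  · ring
  rw [← enn_tele N _ hN0, ← ENNReal.tsum_mul_left]
  refine tsum_congr fun y => ?_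
  by_cases hy : lastD m q < y
  · rw [if_pos hy, if_pos ⟨hp.1, hp.2, hq, hy⟩]; ring
  · rw [if_neg hy, if_neg (fun h => hy h.2.2.2), mul_zero]

theorem get_snoc (k : List ℕ) (x : ℕ) (h : (k ++ [x]).length = k.length + 1)
    (i : Fin (k ++ [x]).length) :
    (k ++ [x]).get i = (Fin.snoc k.get x : Fin (k.length+1) → ℕ) (Fin.cast h i) := by
  obtain ⟨i, hi⟩ := i
  by_cases h' : i < k.length
  · simp [Fin.snoc, h']
  · have : i = k.length := by simp at hi; omega
    subst this
    simp [Fin.snoc]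

/-- **Transport relation for the duality connected sum:**
`Z^D_{n,m}(k_↑; l) = Z^D_{n,m}(k; l_→)` in `[0,∞]`, for all `n, m ≥ 0`,
every nonempty index `k` and every (possibly empty) index `l`; here `l_→ = l ++ [1]`. -/
theorem ZD_transport_up (n m : ℕ) (k l : List ℕ)
    (hk : k ≠ []) (hk1 : ∀ i ∈ k, 1 ≤ i) (hl1 : ∀ i ∈ l, 1 ≤ i) :
    ZD n m (upLast k) l = ZD n m k (l ++ [1]) := by
  obtain ⟨k', x, rfl⟩ : ∃ k' x, k = k' ++ [x] :=
    ⟨k.dropLast, k.getLast hk, (List.dropLast_append_getLast hk).symm⟩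
  have hup : upLast (k' ++ [x]) = k' ++ [x+1] := by
    have : upLast (k' ++ [x]) = (k' ++ [x]).dropLast ++ [(k' ++ [x]).getLast! + 1] := by
      unfold upLast
      split
      · simp_all
      · rfl
    rw [this]
    simp [List.getLast!_eq_getLast?_getD]
  rw [hup, ZD_eq, ZD_eq]
  rw [ZDf_congr n m (Fin.snoc k'.get (x+1) : Fin (k'.length+1) → ℕ) l.get _ l.get (by simp) rfl
      (get_snoc _ _ _) (fun _ => rfl),
    ZDf_congr n m (Fin.snoc k'.get x : Fin (k'.length+1) → ℕ)
      (Fin.snoc l.get 1 : Fin (l.length+1) → ℕ) _ _ (by simp) (by simp)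
      (get_snoc _ _ _) (get_snoc _ _ _)]
  exact ZDf_transport n m _ _ _
end
end

section
/- Transport relation for the Hoffman-duality connected sum: for every nonempty index k, every (possibly empty) index l, and every positive integer N, one has Z^HD_N(k_↑; l) = Z^HD_N(k; ←l). -/
open scoped Classical

noncomputable section

/-- The Hoffman-duality connected sum `Z^HD_N(k; l)`: the sum of
`(-1)^(nₐ-1) · binom(m₁, nₐ) · (∏_{i<a} nᵢ^(-kᵢ)) · nₐ^(-(kₐ-1)) · ∏_j m_j^(-l_j)`
over `1 ≤ n₁ ≤ ⋯ ≤ nₐ ≤ m₁ ≤ ⋯ ≤ m_b ≤ N` (with `m₁ := N` when `b = 0`). -/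
def ZHD (N : ℕ) (k l : List ℕ) : ℚ :=
  ∑ p ∈ Finset.univ.filter
      (fun p : (Fin k.length → Fin (N + 1)) × (Fin l.length → Fin (N + 1)) =>
        (∀ i, 1 ≤ (p.1 i : ℕ)) ∧ Monotone p.1 ∧ Monotone p.2 ∧
          lastD 0 (fun i => (p.1 i : ℕ)) ≤ headD N (fun j => (p.2 j : ℕ))),
    (-1 : ℚ) ^ (lastD 0 (fun i => (p.1 i : ℕ)) - 1) *
      (Nat.choose (headD N fun j => (p.2 j : ℕ)) (lastD 0 fun i => (p.1 i : ℕ)) : ℚ) *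
      (∏ i, (((p.1 i : ℕ) : ℚ) ^
          (if i.1 = k.length - 1 then k.get i - 1 else k.get i))⁻¹) *
      ∏ j, (((p.2 j : ℕ) : ℚ) ^ l.get j)⁻¹

/-- The connected sum with arbitrary exponent functions. -/
def GHD (N c b : ℕ) (e : Fin c → ℕ) (f : Fin b → ℕ) : ℚ :=
  ∑ p ∈ Finset.univ.filter
      (fun p : (Fin c → Fin (N + 1)) × (Fin b → Fin (N + 1)) =>
        (∀ i, 1 ≤ (p.1 i : ℕ)) ∧ Monotone p.1 ∧ Monotone p.2 ∧
          lastD 0 (fun i => (p.1 i : ℕ)) ≤ headD N (fun j => (p.2 j : ℕ))),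
    (-1 : ℚ) ^ (lastD 0 (fun i => (p.1 i : ℕ)) - 1) *
      (Nat.choose (headD N fun j => (p.2 j : ℕ)) (lastD 0 fun i => (p.1 i : ℕ)) : ℚ) *
      (∏ i, (((p.1 i : ℕ) : ℚ) ^ (e i))⁻¹) *
      ∏ j, (((p.2 j : ℕ) : ℚ) ^ f j)⁻¹

theorem GHD_congr (N b : ℕ) {c c' : ℕ} (h : c = c') (e : Fin c → ℕ) (e' : Fin c' → ℕ)
    (f : Fin b → ℕ) (he : ∀ i, e i = e' (Fin.cast h i)) : GHD N c b e f = GHD N c' b e' f := by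
  subst h
  have : e = e' := funext he
  rw [this]

theorem key_range (n M : ℕ) (hn : 1 ≤ n) :
    ∑ m ∈ Finset.range (M + 1), (m.choose n : ℚ) * (m : ℚ)⁻¹ = (M.choose n : ℚ) * (n : ℚ)⁻¹ := by
  have hn0 : (n : ℚ) ≠ 0 := by positivity
  induction M with
  | zero => simp [Nat.choose_eq_zero_of_lt hn]
  | succ M ih =>
    rw [Finset.sum_range_succ, ih]
    obtain ⟨r, rfl⟩ : ∃ r, n = r + 1 := ⟨n - 1, by omega⟩
    have h1 : ((M : ℚ) + 1) * (M.choose r : ℚ) = ((M + 1).choose (r + 1) : ℚ) * ((r : ℚ) + 1) := by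
      exact_mod_cast Nat.add_one_mul_choose_eq M r
    have h2 : ((M + 1).choose (r + 1) : ℚ) = (M.choose r : ℚ) + (M.choose (r + 1) : ℚ) := by
      exact_mod_cast Nat.choose_succ_succ M r
    have hM : ((M : ℚ) + 1) ≠ 0 := by positivity
    have hr : ((r : ℚ) + 1) ≠ 0 := by positivity
    have h3 : ((M + 1).choose (r + 1) : ℚ) * ((M : ℚ) + 1)⁻¹ = (M.choose r : ℚ) * ((r : ℚ) + 1)⁻¹ := by
      field_simp
      linarith
    push_cast
    rw [h3, h2]
    ring

theorem key_fin (N n M : ℕ) (hn : 1 ≤ n) (hM : M ≤ N) :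
    ∑ m : Fin (N + 1), (if n ≤ (m : ℕ) ∧ (m : ℕ) ≤ M then
        ((m : ℕ).choose n : ℚ) * ((m : ℕ) : ℚ)⁻¹ else 0) =
      if n ≤ M then (M.choose n : ℚ) * (n : ℚ)⁻¹ else 0 := by
  rw [Fin.sum_univ_eq_sum_range (fun m : ℕ => if n ≤ m ∧ m ≤ M then
        (m.choose n : ℚ) * (m : ℚ)⁻¹ else 0) (N + 1)]
  have h1 : (if n ≤ M then (M.choose n : ℚ) * (n : ℚ)⁻¹ else 0) =
      (M.choose n : ℚ) * (n : ℚ)⁻¹ := by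
    split_ifs with h
    · rfl
    · rw [Nat.choose_eq_zero_of_lt (by omega)]; simp
  rw [h1, ← key_range n M hn]
  symm
  apply Finset.sum_subset_zero_on_sdiff
  · intro x hx; simp at hx ⊢; omega
  · intro x hx
    simp at hx
    rw [if_neg]; omega
  · intro x hx
    simp at hx
    split_ifs with h
    · rfl
    · rw [Nat.choose_eq_zero_of_lt (by omega)]; simp

theorem headD_le (N b : ℕ) (q : Fin b → Fin (N + 1)) : headD N (fun j => (q j : ℕ)) ≤ N := by
  unfold headD
  split_ifs with h
  · exact Nat.lt_succ_iff.mp (q ⟨0, h⟩).2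
  · exact le_rfl

theorem mono_cons (N b : ℕ) (m : Fin (N + 1)) (q : Fin b → Fin (N + 1)) :
    Monotone (Fin.cons m q : Fin (b + 1) → Fin (N + 1)) ↔
      (m : ℕ) ≤ headD N (fun j => (q j : ℕ)) ∧ Monotone q := by
  constructor
  · intro h
    constructor
    · unfold headD
      split_ifs with hb
      · have := h (Fin.zero_le (Fin.succ ⟨0, hb⟩))
        rw [Fin.cons_zero, Fin.cons_succ] at this
        exact this
      · exact Nat.lt_succ_iff.mp m.2
    · intro i j hij
      have := h (Fin.succ_le_succ_iff.mpr hij)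
      simpa using this
  · rintro ⟨h1, h2⟩ i j hij
    induction i using Fin.cases with
    | zero =>
      induction j using Fin.cases with
      | zero => exact le_rfl
      | succ j =>
        have hb : 0 < b := by have := j.2; omega
        simp only [headD, hb, dif_pos] at h1
        have h3 : q ⟨0, hb⟩ ≤ q j := h2 (Nat.zero_le _)
        simp only [Fin.cons_zero, Fin.cons_succ]
        exact le_trans h1 h3
    | succ i =>
      induction j using Fin.cases with
      | zero => simp at hij
      | succ j =>
        simp only [Fin.cons_succ]
        exact h2 (Fin.succ_le_succ_iff.mp hij)

theorem GHD_transport (N c b : ℕ) (e : Fin (c + 1) → ℕ) (f : Fin b → ℕ) :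
    GHD N (c + 1) b (fun i => e i + if i = Fin.last c then 1 else 0) f =
      GHD N (c + 1) (b + 1) e (Fin.cons 1 f : Fin (b + 1) → ℕ) := by
  unfold GHD
  rw [Finset.sum_filter, Finset.sum_filter, Fintype.sum_prod_type, Fintype.sum_prod_type]
  refine Finset.sum_congr rfl fun p _ => ?_
  rw [← (Fin.consEquiv (fun _ : Fin (b + 1) => Fin (N + 1))).sum_comp, Fintype.sum_prod_type_right]
  refine Finset.sum_congr rfl fun q _ => ?_
  have hlast : lastD 0 (fun i => (p i : ℕ)) = (p (Fin.last c) : ℕ) := by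
    simp [lastD, Fin.last]
  have hhead : ∀ m : Fin (N + 1), headD N (fun j => ((Fin.cons m q : Fin (b + 1) → Fin (N + 1)) j : ℕ))
      = m := by
    intro m
    simp only [headD, Nat.succ_pos, dif_pos]
    rfl
  have hM := headD_le N b q
  simp only [Fin.consEquiv, Equiv.coe_fn_mk, hlast, hhead, mono_cons, Fin.prod_univ_succ (n := b),
    Fin.cons_zero, Fin.cons_succ, pow_one]
  have hprod : (∏ i, (((p i : ℕ) : ℚ) ^ (e i + if i = Fin.last c then 1 else 0))⁻¹) =
      (∏ i, (((p i : ℕ) : ℚ) ^ (e i))⁻¹) * ((p (Fin.last c) : ℕ) : ℚ)⁻¹ := by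
    simp only [pow_add, mul_inv, Finset.prod_mul_distrib]
    congr 1
    rw [Finset.prod_eq_single (Fin.last c)]
    · simp
    · intro i _ hi; simp [hi]
    · simp
  rw [hprod]
  generalize headD N (fun j => (q j : ℕ)) = M at *
  by_cases hp : (∀ i, 1 ≤ (p i : ℕ)) ∧ Monotone p ∧ Monotone q
  · obtain ⟨h1, h2, h3⟩ := hp
    have hk := key_fin N (p (Fin.last c) : ℕ) M (h1 _) hM
    generalize (∏ i, (((p i : ℕ) : ℚ) ^ (e i))⁻¹) = P
    generalize (∏ i, (((q i : ℕ) : ℚ) ^ (f i))⁻¹) = Q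
    have hL : ∀ A B : ℚ, (if (p (Fin.last c) : ℕ) ≤ M then A * (M.choose (p (Fin.last c)) : ℚ) *
        (P * ((p (Fin.last c) : ℕ) : ℚ)⁻¹) * B else 0) = A * P * B *
        (if (p (Fin.last c) : ℕ) ≤ M then (M.choose (p (Fin.last c)) : ℚ) *
          ((p (Fin.last c) : ℕ) : ℚ)⁻¹ else 0) := by
      intro A B
      split_ifs <;> ring
    simp only [h1, h2, h3, true_and, and_true, implies_true]
    rw [hL, ← hk, Finset.mul_sum]
    refine Finset.sum_congr rfl fun m _ => ?_
    by_cases h : (p (Fin.last c) : ℕ) ≤ (m : ℕ) ∧ (m : ℕ) ≤ M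
    · rw [if_pos h, if_pos h.symm]; ring
    · rw [if_neg h, if_neg (fun h' => h h'.symm)]; ring
  · rw [if_neg (by tauto)]
    symm
    apply Finset.sum_eq_zero
    intro m _
    rw [if_neg (by tauto)]

/-- **Transport relation for the Hoffman-duality connected sum:**
`Z^HD_N(k_↑; l) = Z^HD_N(k; ←l)` for every nonempty index `k`, every (possibly empty)
index `l`, and every `N ≥ 1`; here `←l = 1 :: l`. -/
theorem ZHD_transport_up (N : ℕ) (hN : 0 < N) (k l : List ℕ)
    (hk : k ≠ []) (hk1 : ∀ i ∈ k, 1 ≤ i) (hl1 : ∀ i ∈ l, 1 ≤ i) :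
    ZHD N (upLast k) l = ZHD N k (1 :: l) := by
  obtain ⟨ks, x, rfl⟩ : ∃ ks x, k = ks ++ [x] := 
    ⟨k.dropLast, k.getLast hk, (List.dropLast_append_getLast hk).symm⟩
  have hx : 1 ≤ x := hk1 x (by simp)
  have hup : upLast (ks ++ [x]) = ks ++ [x + 1] := by
    have h1 : upLast (ks ++ [x]) =
        (ks ++ [x]).dropLast ++ [(ks ++ [x]).getLast! + 1] := by
      cases ks <;> rfl
    rw [h1, List.dropLast_concat, List.getLast!_eq_getLast?_getD]
    simp
  rw [hup]
  let e : Fin (ks.length + 1) → ℕ := fun i =>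
    if h : i.1 < ks.length then ks[i.1] else x - 1
  have hl : ∀ y : ℕ, (ks ++ [y]).length = ks.length + 1 := fun y => by simp
  have h1 : ZHD N (ks ++ [x + 1]) l = GHD N (ks.length + 1) l.length
      (fun i => e i + if i = Fin.last ks.length then 1 else 0) l.get := by
    refine GHD_congr N _ (hl (x + 1)) _ _ _ fun i => ?_
    obtain ⟨i, hi⟩ := i
    have hi' := hi
    simp only [hl] at hi'
    by_cases h : i < ks.length
    · simp [e, h, Fin.ext_iff, List.getElem_append_left, h.ne]
    · have : i = ks.length := by omega
      subst this
      simp [e, Fin.ext_iff]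
      omega
  have h2 : ZHD N (ks ++ [x]) (1 :: l) = GHD N (ks.length + 1) (l.length + 1) e
      (Fin.cons 1 l.get : Fin (l.length + 1) → ℕ) := by
    have hf : (Fin.cons 1 l.get : Fin (l.length + 1) → ℕ) = (1 :: l).get := by
      funext j
      induction j using Fin.cases <;> rfl
    rw [hf]
    refine GHD_congr N _ (hl x) _ _ _ fun i => ?_
    obtain ⟨i, hi⟩ := i
    have hi' := hi
    simp only [hl] at hi'
    by_cases h : i < ks.length
    · simp [e, h, List.getElem_append_left, h.ne]
    · have : i = ks.length := by omega
      subst this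
      simp [e]
  rw [h1, h2, GHD_transport]
end
end

section
/- Transport relation for Ohno's cyclic connected sum: for every index k=(k_1,…,k_a) with a≥2 and every positive integer N, one has Z^O_N(k_↑) = Z^O_N(↑k) − ζ_N(k_↑). -/
open scoped Classical

noncomputable section

/-- The multiple harmonic sum `ζ_N(k) = Σ_{0 < n₁ < ⋯ < nₐ ≤ N} ∏ nᵢ^(-kᵢ)`. -/
def mhs (N : ℕ) (k : List ℕ) : ℚ :=
  ∑ n ∈ Finset.univ.filter
      (fun n : Fin k.length → Fin (N + 1) => (∀ i, 0 < (n i : ℕ)) ∧ StrictMono n),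
    ∏ i, (((n i : ℕ) : ℚ) ^ k.get i)⁻¹

/-- Ohno's cyclic connected sum `Z^O_N(k)`: the sum of
`n₁^(-(k₁-1)) · (∏_{i≥2} nᵢ^(-kᵢ)) · (nₐ - n₁)⁻¹` over `0 < n₁ < ⋯ < nₐ ≤ N`. -/
def ZO (N : ℕ) (k : List ℕ) : ℚ :=
  ∑ n ∈ Finset.univ.filter
      (fun n : Fin k.length → Fin (N + 1) => (∀ i, 0 < (n i : ℕ)) ∧ StrictMono n),
    (∏ i, (((n i : ℕ) : ℚ) ^ (if i.1 = 0 then k.get i - 1 else k.get i))⁻¹) *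
      (((lastD 0 (fun i => (n i : ℕ)) - headD 0 (fun i => (n i : ℕ)) : ℕ) : ℚ))⁻¹

theorem mhs_eq_aux (N : ℕ) (k : List ℕ) (c : ℕ) (h : k.length = c) :
    mhs N k = ∑ n ∈ Finset.univ.filter
      (fun n : Fin c → Fin (N + 1) => (∀ i, 0 < (n i : ℕ)) ∧ StrictMono n),
      ∏ i : Fin c, (((n i : ℕ) : ℚ) ^ k.getD i.1 0)⁻¹ := by
  subst h
  simp [mhs]

theorem ZO_eq_aux (N : ℕ) (k : List ℕ) (c : ℕ) (h : k.length = c) :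
    ZO N k = ∑ n ∈ Finset.univ.filter
      (fun n : Fin c → Fin (N + 1) => (∀ i, 0 < (n i : ℕ)) ∧ StrictMono n),
      (∏ i : Fin c, (((n i : ℕ) : ℚ) ^ (if i.1 = 0 then k.getD i.1 0 - 1 else k.getD i.1 0))⁻¹) *
      (((lastD 0 (fun i => (n i : ℕ)) - headD 0 (fun i => (n i : ℕ)) : ℕ) : ℚ))⁻¹ := by
  subst h
  simp [ZO]

theorem getD_mid_aux (m : List ℕ) (b : ℕ) (i : Fin m.length) :
    (m ++ [b]).getD i.1 0 = m.getD i.1 0 := by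
  rw [List.getD_append _ _ _ _ i.2]

theorem getD_end_aux (m : List ℕ) (b : ℕ) :
    (m ++ [b]).getD m.length 0 = b := by
  simp

/-- **Transport relation for Ohno's cyclic connected sum:**
`Z^O_N(k_↑) = Z^O_N(↑k) - ζ_N(k_↑)` for every index `k` of length `≥ 2`
and every `N ≥ 1`. -/
theorem ZO_transport (N : ℕ) (hN : 0 < N) (k : List ℕ)
    (hk : 2 ≤ k.length) (hk1 : ∀ i ∈ k, 1 ≤ i) :
    ZO N (upLast k) = ZO N (upFirst k) - mhs N (upLast k) := by
  obtain ⟨a, m, b, rfl⟩ : ∃ a m b, k = a :: (m ++ [b]) := by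
    match k, hk with
    | a :: x :: t, _ =>
      refine ⟨a, (x :: t).dropLast, (x :: t).getLast (by simp), ?_⟩
      rw [List.dropLast_append_getLast]
  have ha : 1 ≤ a := hk1 a (by simp)
  obtain ⟨a, rfl⟩ : ∃ a', a = a' + 1 := ⟨a - 1, by omega⟩
  have h1 : upLast ((a + 1) :: (m ++ [b])) = (a + 1) :: (m ++ [b + 1]) := by
    have e : (a + 1) :: (m ++ [b]) = ((a + 1) :: m) ++ [b] := rfl
    rw [upLast, e, List.dropLast_concat, List.getLast!_eq_getLast?_getD, List.getLast?_concat]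
    · rfl
    · simp
  have h2 : upFirst ((a + 1) :: (m ++ [b])) = (a + 1 + 1) :: (m ++ [b]) := rfl
  rw [h1, h2, ZO_eq_aux N _ (m.length + 1 + 1) (by simp),
    ZO_eq_aux N _ (m.length + 1 + 1) (by simp), mhs_eq_aux N _ (m.length + 1 + 1) (by simp),
    ← Finset.sum_sub_distrib]
  refine Finset.sum_congr rfl fun n hn => ?_
  obtain ⟨hpos, hmono⟩ := (Finset.mem_filter.1 hn).2
  have hlast : lastD 0 (fun i => (n i : ℕ)) = (n (Fin.last m.length).succ : ℕ) := by
    simp [lastD]; rfl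
  have hhead : headD 0 (fun i => (n i : ℕ)) = (n 0 : ℕ) := by
    simp [headD]
  have hlt : (n 0 : ℕ) < (n (Fin.last m.length).succ : ℕ) := hmono (Fin.succ_pos _)
  have h0 := hpos 0
  rw [hlast, hhead, Nat.cast_sub hlt.le]
  simp only [Fin.prod_univ_succ (n := m.length + 1), Fin.prod_univ_castSucc (n := m.length),
    Fin.val_succ, Fin.val_castSucc, Fin.val_last, List.getD_cons_succ, getD_mid_aux,
    getD_end_aux, Fin.val_zero, List.getD_cons_zero, if_true, Nat.add_sub_cancel,
    Nat.add_one_ne_zero, if_false]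
  generalize (∏ i : Fin m.length, _ : ℚ) = P
  have hltq : ((n 0 : ℕ) : ℚ) < ((n (Fin.last m.length).succ : ℕ) : ℚ) := by exact_mod_cast hlt
  have h0q : (0 : ℚ) < ((n 0 : ℕ) : ℚ) := by exact_mod_cast h0
  generalize ((n 0 : ℕ) : ℚ) = x at *
  generalize ((n (Fin.last m.length).succ : ℕ) : ℚ) = y at *
  have hx : x ≠ 0 := h0q.ne'
  have hy : y ≠ 0 := (h0q.trans hltq).ne'
  have hyx : y - x ≠ 0 := (sub_pos.2 hltq).ne'
  field_simp
  ring
end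
end
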